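/- Let η ≥ 1 be an integer, let G be a finite simple graph, and let G' be a graph obtained from G as follows: for each i in a finite index set I there is a vertex u_i ∈ V(G) and a set J_i of η new vertices, where the sets J_i are pairwise disjoint and disjoint from V(G), such that in G' the set J_i ∪ {u_i} is a clique, no vertex of J_i has any neighbor outside J_i ∪ {u_i}, and the induced subgraph of G' on V(G) equals G. If S' is a connected η-treedepth deletion set of G' with S' ∩ V(G) ≠ ∅, then S' ∩ V(G) is a connected η-treedepth deletion set of G. -/

import Mathlib

open SimpleGraph Set

variable {V : Type*}

/-- The connected component of `x` inside the induced subgraph `G[S]`, as a subset of `V`. -/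
def compIn (G : SimpleGraph V) (S : Set V) (x : V) : Set V :=
  {y | ∃ (hx : x ∈ S) (hy : y ∈ S), (G.induce S).Reachable ⟨x, hx⟩ ⟨y, hy⟩}

/-- `tdLE G n S` means that the treedepth of the induced subgraph `G[S]` is at most `n`,
following the recursive definition of treedepth: a graph has treedepth at most `n+1`
iff from every connected component one can delete a vertex leaving a graph of
treedepth at most `n`; only the empty graph has treedepth at most `0`. -/
def tdLE (G : SimpleGraph V) : ℕ → Set V → Prop
  | 0, S => S = ∅
  | n+1, S => ∀ x ∈ S, ∃ v ∈ compIn G S x, tdLE G n (compIn G S x \ {v})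

/-- The treedepth of the induced subgraph `G[S]`. -/
noncomputable def td (G : SimpleGraph V) (S : Set V) : ℕ :=
  sInf {n | tdLE G n S}

/-- `N_G(C)`: the set of vertices outside `C` having a neighbor in `C`. -/
def nbhd (G : SimpleGraph V) (C : Set V) : Set V :=
  {v | v ∉ C ∧ ∃ u ∈ C, G.Adj u v}

/-- `C` is a connected component of the induced subgraph `G[R]`. -/
def IsCompOf (G : SimpleGraph V) (R C : Set V) : Prop :=
  ∃ x ∈ R, C = compIn G R x

/-- `S` is an `η`-treedepth deletion set of `G`: `td(G − S) ≤ η`. -/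
def IsTDS (G : SimpleGraph V) (η : ℕ) (S : Set V) : Prop :=
  td G Sᶜ ≤ η

/-- `S` is a connected `η`-treedepth deletion set of `G`. -/
def IsCTDS (G : SimpleGraph V) (η : ℕ) (S : Set V) : Prop :=
  IsTDS G η S ∧ S.Nonempty ∧ (G.induce S).Connected

/-- A rooted forest with vertex set `A ⊆ V`, given by its (reflexive) ancestor relation:
`anc u v` means `u` is an ancestor of `v` (every vertex being an ancestor of itself). -/
structure RootedForest (V : Type*) (A : Set V) where
  anc : V → V → Prop
  mem_left : ∀ {u v}, anc u v → u ∈ A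
  mem_right : ∀ {u v}, anc u v → v ∈ A
  refl : ∀ v ∈ A, anc v v
  trans : ∀ {u v w}, anc u v → anc v w → anc u w
  antisymm : ∀ {u v}, anc u v → anc v u → u = v
  chain : ∀ {u w v}, anc u v → anc w v → anc u w ∨ anc w u

/-- Depth of a rooted forest: the maximum number of vertices on a root-to-leaf path,
i.e. the maximum number of ancestors of a vertex. -/
noncomputable def RootedForest.depth [Fintype V] {A : Set V} (F : RootedForest V A) : ℕ :=
  Finset.univ.sup fun v : V => {u | F.anc u v}.ncard

/-- `F` is a treedepth decomposition of `G[A]`: the endpoints of every edge of `G[A]`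
are in ancestor-descendant relation in `F`. -/
def IsTDDecompOn (G : SimpleGraph V) (A : Set V) (F : RootedForest V A) : Prop :=
  ∀ u v, u ∈ A → v ∈ A → G.Adj u v → F.anc u v ∨ F.anc v u

/-- `A` is an `(x,y)`-vertex cut in `G`: `A` avoids `x` and `y` and there is
no path from `x` to `y` in `G − A`. -/
def IsVertexCut (G : SimpleGraph V) (x y : V) (A : Set V) : Prop :=
  ∃ (hx : x ∈ Aᶜ) (hy : y ∈ Aᶜ), ¬ (G.induce Aᶜ).Reachable ⟨x, hx⟩ ⟨y, hy⟩

/-- The weight of a subgraph: the sum of the weights of its edges. -/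
noncomputable def subWeight (w : Sym2 V → ℕ) {G : SimpleGraph V} (T : G.Subgraph) : ℕ :=
  ∑ᶠ e ∈ T.edgeSet, w e

/-- The leaves (vertices with exactly one neighbor) of a subgraph. -/
def subLeaves {G : SimpleGraph V} (T : G.Subgraph) : Set V :=
  {v | (T.neighborSet v).ncard = 1}

/-- `T` is a Steiner tree for the terminal set `R` in `G`. -/
def IsSteinerTree (G : SimpleGraph V) (R : Set V) (T : G.Subgraph) : Prop :=
  T.coe.IsTree ∧ R ⊆ T.verts

/-- `T` is a `t`-component for `R`: a tree with at most `t` leaves, all of which lie in `R`. -/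
def IsTComponent (G : SimpleGraph V) (R : Set V) (t : ℕ) (T : G.Subgraph) : Prop :=
  T.coe.IsTree ∧ (subLeaves T).ncard ≤ t ∧ subLeaves T ⊆ R

/-!
A path that leaves a set `C` of vertices after entering it passes through `N(C)` both times. Hence
if `N(C)` has at most one vertex, a path whose ends lie outside `C` never meets `C`. Every `N(J i)`
is contained in `{u i}`, so the paths of `G'[S']` between vertices of `V(G)` stay in `V(G)`, and
`G'[S' ∩ V(G)]` is connected. The treedepth bound is monotonicity: `V(G) ∖ S' ⊆ V(G') ∖ S'`.
-/

theorem compIn_subset (G : SimpleGraph V) (S : Set V) (x : V) : compIn G S x ⊆ S :=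
  fun _ ⟨_, hy, _⟩ => hy

theorem mem_compIn_self (G : SimpleGraph V) {S : Set V} {x : V} (hx : x ∈ S) :
    x ∈ compIn G S x :=
  ⟨hx, hx, Reachable.refl _⟩

theorem compIn_mono (G : SimpleGraph V) {S T : Set V} (h : S ⊆ T) (x : V) :
    compIn G S x ⊆ compIn G T x :=
  fun _ ⟨hx, hy, hxy⟩ => ⟨h hx, h hy, hxy.map (induceHomOfLE G h).toHom⟩

theorem tdLE.mono {G : SimpleGraph V} {n : ℕ} {S T : Set V} (h : S ⊆ T) (hT : tdLE G n T) :
    tdLE G n S := by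
  induction n generalizing S T with
  | zero => exact subset_eq_empty h hT
  | succ n ih =>
    intro x hx
    obtain ⟨v, -, hdel⟩ := hT x (h hx)
    have hsub : compIn G S x ⊆ compIn G T x := compIn_mono G h x
    by_cases hv : v ∈ compIn G S x
    · exact ⟨v, hv, ih (sdiff_subset_sdiff_left hsub) hdel⟩
    · -- `v` lies outside the smaller component, so any vertex of it may be deleted instead.
      have hsub_del : compIn G S x ⊆ compIn G T x \ {v} := subset_sdiff_singleton hsub hv
      exact ⟨x, mem_compIn_self G hx, ih (sdiff_subset.trans hsub_del) hdel⟩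

theorem tdLE_of_ncard_le (G : SimpleGraph V) {n : ℕ} {S : Set V} (hS : S.Finite)
    (hn : S.ncard ≤ n) : tdLE G n S := by
  induction n generalizing S with
  | zero => exact (ncard_eq_zero hS).1 (Nat.le_zero.1 hn)
  | succ n ih =>
    intro x hx
    have hsub : compIn G S x \ {x} ⊆ S \ {x} := sdiff_subset_sdiff_left (compIn_subset G S x)
    have hcard : (S \ {x}).ncard ≤ n :=
      Nat.le_of_lt_succ ((ncard_sdiff_singleton_lt_of_mem hx hS).trans_le hn)
    exact ⟨x, mem_compIn_self G hx, (ih hS.sdiff hcard).mono hsub⟩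

-- `td` takes the junk value `0` on a graph of infinite treedepth.
theorem td_mono {G : SimpleGraph V} {S T : Set V} (h : S ⊆ T) (hT : ∃ n, tdLE G n T) :
    td G S ≤ td G T :=
  Nat.sInf_le ((Nat.sInf_mem hT).mono h)

theorem nbhd_subset_iff {G : SimpleGraph V} {C D : Set V} :
    nbhd G C ⊆ D ↔ ∀ w ∈ C, ∀ x, G.Adj w x → x ∈ C ∪ D := by
  refine ⟨fun h w hw x hwx => ?_, fun h x ⟨hx, w, hw, hwx⟩ => (h w hw x hwx).resolve_left hx⟩
  by_cases hx : x ∈ C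
  · exact Or.inl hx
  · exact Or.inr (h ⟨hx, w, hw, hwx⟩)

theorem exists_mem_support_nbhd {G : SimpleGraph V} {C : Set V} {x y : V} (p : G.Walk x y)
    (hx : x ∈ C) (hy : y ∉ C) : ∃ v ∈ p.support, v ∈ nbhd G C := by
  obtain ⟨d, hd, hfst, hsnd⟩ := p.exists_boundary_dart C hx hy
  exact ⟨d.snd, p.dart_snd_mem_support_of_mem_darts hd, hsnd, d.fst, hfst, d.adj⟩

theorem notMem_of_isPath_of_subsingleton_nbhd {G : SimpleGraph V} {C : Set V}
    (hC : (nbhd G C).Subsingleton) {a b : V} {p : G.Walk a b} (hp : p.IsPath)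
    (ha : a ∉ C) (hb : b ∉ C) {x : V} (hx : x ∈ p.support) : x ∉ C := by
  classical
  intro hxC
  obtain ⟨v, hv, hvC⟩ := exists_mem_support_nbhd (p.takeUntil x hx).reverse hxC ha
  obtain ⟨w, hw, hwC⟩ := exists_mem_support_nbhd (p.dropUntil x hx) hxC hb
  have hsplit : ((p.takeUntil x hx).append (p.dropUntil x hx)).IsPath := by rwa [p.take_spec hx]
  have hwx : w ≠ x := fun h => hwC.1 (h ▸ hxC)
  have hvw : v ≠ w := hsplit.ne_of_mem_support_of_append hwx (by simpa using hv) hw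
  exact hvw (hC hvC hwC)

theorem preconnected_induce_sdiff_iUnion {G : SimpleGraph V} {S : Set V} {I : Type*}
    {J : I → Set V} (hS : (G.induce S).Preconnected) (hJ : ∀ i, (nbhd G (J i)).Subsingleton) :
    (G.induce (S \ ⋃ i, J i)).Preconnected := by
  rintro ⟨a, haS, haJ⟩ ⟨b, hbS, hbJ⟩
  rw [mem_iUnion, not_exists] at haJ hbJ
  obtain ⟨q, hq⟩ := (hS ⟨a, haS⟩ ⟨b, hbS⟩).exists_isPath
  let p : G.Walk a b := q.map (Embedding.induce S).toHom
  have hp : p.IsPath := hq.map Subtype.val_injective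
  have hpS : ∀ x ∈ p.support, x ∈ S := by
    intro x hx
    obtain ⟨y, -, rfl⟩ := List.mem_map.1 (Walk.support_map _ q ▸ hx)
    exact y.2
  have hpJ : ∀ x ∈ p.support, x ∉ ⋃ i, J i := by
    intro x hx hxJ
    obtain ⟨i, hi⟩ := mem_iUnion.1 hxJ
    exact notMem_of_isPath_of_subsingleton_nbhd (hJ i) hp (haJ i) (hbJ i) hx hi
  exact (p.induce (S \ ⋃ i, J i) fun x hx => ⟨hpS x hx, hpJ x hx⟩).reachable

theorem stmt7_general {η : ℕ} {G' : SimpleGraph V} {A : Set V} {I : Type*}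
    {J : I → Set V} (hJ : ∀ i, (nbhd G' (J i)).Subsingleton) (hcover : Aᶜ = ⋃ i, J i)
    {S' : Set V} (hfin : ∃ n, tdLE G' n S'ᶜ) (hS' : IsCTDS G' η S') (hmeet : (S' ∩ A).Nonempty) :
    td G' (A \ (S' ∩ A)) ≤ η ∧ (S' ∩ A).Nonempty ∧ (G'.induce (S' ∩ A)).Connected := by
  obtain ⟨htd, -, hconn⟩ := hS'
  have hsub : A \ (S' ∩ A) ⊆ S'ᶜ := by
    rw [sdiff_inter_self_eq_sdiff]
    exact sdiff_subset_compl A S'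
  have hinter : S' \ ⋃ i, J i = S' ∩ A := by rw [← hcover, sdiff_compl]
  have hpre : (G'.induce (S' ∩ A)).Preconnected :=
    hinter ▸ preconnected_induce_sdiff_iUnion hconn.preconnected hJ
  exact ⟨(td_mono hsub hfin).trans htd, hmeet, (connected_iff _).2 ⟨hpre, hmeet.to_subtype⟩⟩

/-- `G'` is obtained from the graph `G = G'[A]` by attaching, for each `i`
in a finite index set, a pendant clique `J i` of `η` new vertices to the vertex `u i ∈ A`
(so `J i ∪ {u i}` is a clique in `G'` and vertices of `J i` have no other neighbors),
the sets `J i` being pairwise disjoint and making up exactly `V(G') ∖ V(G)`.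
If `S'` is a connected `η`-treedepth deletion set of `G'` with `S' ∩ V(G) ≠ ∅`, then
`S' ∩ V(G)` is a connected `η`-treedepth deletion set of `G`. -/
theorem stmt7 {V : Type*} [Fintype V] (η : ℕ) (hη : 1 ≤ η)
    (G' : SimpleGraph V) (A : Set V) {I : Type*} [Fintype I]
    (u : I → V) (J : I → Set V)
    (huA : ∀ i, u i ∈ A)
    (hJA : ∀ i, Disjoint (J i) A)
    (hJJ : ∀ i j, i ≠ j → Disjoint (J i) (J j))
    (hJcard : ∀ i, (J i).ncard = η)
    (hclique : ∀ i, G'.IsClique (J i ∪ {u i}))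
    (hpriv : ∀ i, ∀ w ∈ J i, ∀ x, G'.Adj w x → x ∈ J i ∪ {u i})
    (hcover : Aᶜ = ⋃ i, J i)
    (S' : Set V) (hS' : IsCTDS G' η S') (hmeet : (S' ∩ A).Nonempty) :
    td G' (A \ (S' ∩ A)) ≤ η ∧ (S' ∩ A).Nonempty ∧ (G'.induce (S' ∩ A)).Connected :=
  stmt7_general (fun i => subsingleton_singleton.anti (nbhd_subset_iff.2 (hpriv i))) hcover
    ⟨_, tdLE_of_ncard_le G' (toFinite _) le_rfl⟩ hS' hmeet
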